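/- arXiv:1112.1213 — 9 statements merged into one kernel-verified Lean document; each statement's English description precedes it below -/
import Mathlib

section
/- Let H be an abelian group and ⟨-,-⟩ : H × H → ℤ an alternating ℤ-bilinear form. Then the ℚ-vector space ℚH with basis {[x] : x ∈ H}, equipped with the unique ℚ-bilinear bracket satisfying [[x],[y]] = ⟨x,y⟩·[x+y] for all x, y ∈ H, is a Lie algebra over ℚ; that is, the bracket is alternating ([X,X] = 0 for all X ∈ ℚH) and satisfies the Jacobi identity. -/
/-!
Skew-symmetry and the Jacobi identity are multilinear in their arguments, so they only need to be
checked on the basis elements `[x]`. Skew-symmetry comes from `ω` being alternating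
(`goldmanBracket_skew`), and over `ℚ` it gives `[X, X] = 0`. The Jacobi identity for `[x], [y], [z]`
is a cancellation in the coefficient of `[x + y + z]` (`goldmanBracket_jacobi_single`).
-/

open Finsupp

variable {H : Type*} [AddCommGroup H]

/-- The kernel of the `ℤ`-linear map `μ : H → Hom_ℤ(H, ℤ)` induced by the
alternating form `ω`, i.e. `ker μ = {x ∈ H | ∀ y, ⟨x, y⟩ = 0}`. -/
def kerMu (ω : H →ₗ[ℤ] H →ₗ[ℤ] ℤ) : AddSubgroup H where
  carrier := {x | ∀ y, ω x y = 0}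
  add_mem' := by
    intro a b ha hb y
    simp [map_add, ha y, hb y]
  zero_mem' := by intro y; simp
  neg_mem' := by
    intro a ha y
    simp [map_neg, ha y]

/-- Skew-symmetry holds on basis elements because `ω` is alternating and `x + y = y + x`; it
extends to all of `ℚH` by bilinearity. -/
theorem goldmanBracket_skew
    (ω : H →ₗ[ℤ] H →ₗ[ℤ] ℤ) (halt : ∀ x : H, ω x x = 0)
    (B : (H →₀ ℚ) →ₗ[ℚ] (H →₀ ℚ) →ₗ[ℚ] (H →₀ ℚ))
    (hB : ∀ x y : H,
      B (single x 1) (single y 1) = (ω x y : ℚ) • single (x + y) (1 : ℚ))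
    (X Y : H →₀ ℚ) : B X Y = -B Y X := by
  have hskew : ∀ x y, ω x y = -ω y x := fun x y => (LinearMap.IsAlt.neg halt y x).symm
  have h : B = -B.flip := by
    ext1 x
    ext1
    ext1 y
    ext1
    simp [hB, hskew x y, add_comm x y]
  exact LinearMap.congr_fun₂ h X Y

/-- The Jacobi identity on basis elements. With `a = ⟨x,y⟩`, `b = ⟨y,z⟩`, `c = ⟨z,x⟩`, the
coefficient of `[x + y + z]` is `b (a - c) + c (b - a) + a (c - b) = 0`. -/
theorem goldmanBracket_jacobi_single
    (ω : H →ₗ[ℤ] H →ₗ[ℤ] ℤ) (halt : ∀ x : H, ω x x = 0)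
    (B : (H →₀ ℚ) →ₗ[ℚ] (H →₀ ℚ) →ₗ[ℚ] (H →₀ ℚ))
    (hB : ∀ x y : H,
      B (single x 1) (single y 1) = (ω x y : ℚ) • single (x + y) (1 : ℚ))
    (x y z : H) :
    B (single x 1) (B (single y 1) (single z 1)) + B (single y 1) (B (single z 1) (single x 1))
      + B (single z 1) (B (single x 1) (single y 1)) = 0 := by
  have hskew : ∀ x y, ω x y = -ω y x := fun x y => (LinearMap.IsAlt.neg halt y x).symm
  have e₁ : y + (z + x) = x + (y + z) := by abel
  have e₂ : z + (x + y) = x + (y + z) := by abel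
  simp only [hB, map_smul, smul_smul, e₁, e₂, ← add_smul]
  convert zero_smul ℚ _ using 2
  simp only [map_add, hskew x z, hskew y x, hskew z y]
  push_cast
  ring

/-- `ℚH` with the unique `ℚ`-bilinear bracket satisfying
`[[x],[y]] = ⟨x,y⟩·[x+y]` is a Lie algebra over `ℚ`: the bracket is alternating
and satisfies the Jacobi identity. -/
theorem homologicalGoldman_isLieAlgebra
    (ω : H →ₗ[ℤ] H →ₗ[ℤ] ℤ) (halt : ∀ x : H, ω x x = 0)
    (B : (H →₀ ℚ) →ₗ[ℚ] (H →₀ ℚ) →ₗ[ℚ] (H →₀ ℚ))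
    (hB : ∀ x y : H,
      B (single x 1) (single y 1) = (ω x y : ℚ) • single (x + y) (1 : ℚ)) :
    (∀ X : H →₀ ℚ, B X X = 0) ∧
    (∀ X Y Z : H →₀ ℚ, B X (B Y Z) + B Y (B Z X) + B Z (B X Y) = 0) := by
  refine ⟨fun X => self_eq_neg.mp (goldmanBracket_skew ω halt B hB X X), fun X Y Z => ?_⟩
  have hs : ∀ (x : H) (r : ℚ), single x r = r • single x (1 : ℚ) := fun x r => by simp
  -- The Jacobi expression is additive in each argument; this reduces it to multiples of basis
  -- elements, one argument at a time.
  induction X using Finsupp.induction_linear with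
  | zero => simp
  | add X X' hX hX' =>
    simp only [map_add, LinearMap.add_apply]
    rw [← add_zero (0 : H →₀ ℚ)]
    nth_rewrite 1 [← hX]
    rw [← hX']
    abel
  | single x r =>
    induction Y using Finsupp.induction_linear with
    | zero => simp
    | add Y Y' hY hY' =>
      simp only [map_add, LinearMap.add_apply]
      rw [← add_zero (0 : H →₀ ℚ)]
      nth_rewrite 1 [← hY]
      rw [← hY']
      abel
    | single y s =>
      induction Z using Finsupp.induction_linear with
      | zero => simp
      | add Z Z' hZ hZ' =>
        simp only [map_add, LinearMap.add_apply]
        rw [← add_zero (0 : H →₀ ℚ)]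
        nth_rewrite 1 [← hZ]
        rw [← hZ']
        abel
      | single z t =>
        have h := congrArg (fun W => (r * s * t) • W)
          (goldmanBracket_jacobi_single ω halt B hB x y z)
        rw [hs x r, hs y s, hs z t]
        simp only [map_smul, LinearMap.smul_apply, smul_add, smul_smul, smul_zero] at h ⊢
        rw [← h]
        congr 3 <;> ring
end

section
/- (Key lemma) Let x₁, …, xₙ ∈ H with xᵢ ∉ ker μ for every i = 1, …, n. Then there exists z ∈ H such that ⟨xᵢ, z⟩ ≠ 0 for all i = 1, …, n. -/
/-!
The proof is by induction on `n`. If `z` pairs nontrivially with `x₁, …, xₙ` and `y` pairs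
nontrivially with `x₀`, then each `⟨xᵢ, z + k y⟩ = ⟨xᵢ, z⟩ + k ⟨xᵢ, y⟩` is a nonzero polynomial of
degree at most one in `k`, so it vanishes for at most one integer `k`. As `ℤ` is infinite, some
`k` avoids all these finitely many roots, and `z + k y` is the required element.
-/

open Finsupp

variable {H : Type*} [AddCommGroup H]

theorem finite_setOf_add_mul_eq_zero {a b : ℤ} (h : a ≠ 0 ∨ b ≠ 0) :
    {k : ℤ | a + k * b = 0}.Finite := by
  refine Set.Subsingleton.finite fun k hk l hl => ?_
  simp only [Set.mem_ofPred_eq] at hk hl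
  have hb : b ≠ 0 := by
    rintro rfl
    simp_all
  exact mul_right_cancel₀ hb (by linarith)

/-- **Key lemma.** If `x₁, …, xₙ ∈ H \ ker μ`, then there exists
`z ∈ H` with `⟨xᵢ, z⟩ ≠ 0` for all `i`. -/
theorem exists_nonzero_pairing
    (ω : H →ₗ[ℤ] H →ₗ[ℤ] ℤ) (halt : ∀ x : H, ω x x = 0)
    (n : ℕ) (x : Fin n → H) (hx : ∀ i, x i ∉ kerMu ω) :
    ∃ z : H, ∀ i, ω (x i) z ≠ 0 := by
  induction n with
  | zero => exact ⟨0, fun i => i.elim0⟩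
  | succ n ih =>
    obtain ⟨z, hz⟩ := ih (fun i => x i.succ) (fun i => hx i.succ)
    obtain ⟨y, hy⟩ : ∃ y, ω (x 0) y ≠ 0 := by
      by_contra! h
      exact hx 0 h
    have hzy : ∀ i, ω (x i) z ≠ 0 ∨ ω (x i) y ≠ 0 :=
      Fin.cases (Or.inr hy) fun i => Or.inl (hz i)
    obtain ⟨k, hk⟩ :=
      (Set.finite_iUnion fun i => finite_setOf_add_mul_eq_zero (hzy i)).exists_notMem
    refine ⟨z + k • y, fun i hi => hk (Set.mem_iUnion.2 ⟨i, ?_⟩)⟩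
    simpa using hi
end

section
/- (Decomposition of an ideal with respect to ker μ-degree) Let 𝔥 be an ideal of ℚH. Then 𝔥 = ⊕_{x̄ ∈ H/ker μ} (𝔥 ∩ ℚx̄); equivalently, for every X ∈ 𝔥, each component of X in the direct sum decomposition ℚH = ⊕_{x̄ ∈ H/ker μ} ℚx̄ again lies in 𝔥. -/
/-!
For `a ∈ H`, the composite `ad [-2a] ∘ ad [a] ∘ ad [a]` is diagonal in the basis `[y]`, with
eigenvalue `-2 ⟨a, y⟩ ^ 3` at `[y]`. It preserves every ideal, and since cubing is injective on `ℤ`,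
these eigenvalues for varying `a` separate the cosets of `ker μ` (using two factors, `ad [-a] ∘ ad [a]`,
would only give `-⟨a, y⟩ ^ 2`, which confuses `y` with `-y`). Hence for `X` in the ideal, any basis
element of the support outside the coset `c` can be killed by an affine function of such an operator
that acts as the identity on `ℚc`; induction on the size of the support leaves the `c`-component.
-/

open Finsupp

variable {H : Type*} [AddCommGroup H]

/-- The composite `ad [-2a] ∘ ad [a] ∘ ad [a]` acts diagonally. -/
theorem bracket_triple_apply
    (ω : H →ₗ[ℤ] H →ₗ[ℤ] ℤ) (halt : ∀ x : H, ω x x = 0)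
    (B : (H →₀ ℚ) →ₗ[ℚ] (H →₀ ℚ) →ₗ[ℚ] (H →₀ ℚ))
    (hB : ∀ x y : H,
      B (single x 1) (single y 1) = (ω x y : ℚ) • single (x + y) (1 : ℚ))
    (a : H) (X : H →₀ ℚ) (v : H) :
    B (single (-(a + a)) 1) (B (single a 1) (B (single a 1) X)) v
      = -2 * (ω a v : ℚ) ^ 3 * X v := by
  induction X using Finsupp.induction_linear with
  | zero => simp
  | add f g hf hg => simp only [map_add, Finsupp.add_apply, hf, hg]; ring
  | single y r =>
    have hr : (single y r : H →₀ ℚ) = r • single y 1 := by simp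
    have hy : -(a + a) + (a + (a + y)) = y := by abel
    rw [hr]
    simp only [map_smul, hB, hy, map_add, map_neg, LinearMap.neg_apply, LinearMap.add_apply, halt,
      Finsupp.smul_apply, smul_eq_mul]
    by_cases h : y = v
    · subst h
      simp only [Finsupp.single_eq_same]
      push_cast
      ring
    · simp [h]

open Classical in
/-- **Decomposition of an ideal with respect to `ker μ`-degree.**
Let `𝔥` be an ideal of `ℚH`. Then `𝔥 = ⊕_{x̄ ∈ H/ker μ} (𝔥 ∩ ℚx̄)`: for every
`X ∈ 𝔥`, the component of `X` supported on any coset of `ker μ` again lies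
in `𝔥`. -/
theorem ideal_decomposition
    (ω : H →ₗ[ℤ] H →ₗ[ℤ] ℤ) (halt : ∀ x : H, ω x x = 0)
    (B : (H →₀ ℚ) →ₗ[ℚ] (H →₀ ℚ) →ₗ[ℚ] (H →₀ ℚ))
    (hB : ∀ x y : H,
      B (single x 1) (single y 1) = (ω x y : ℚ) • single (x + y) (1 : ℚ))
    (𝔥 : Submodule ℚ (H →₀ ℚ))
    (hIdeal : ∀ X Y : H →₀ ℚ, Y ∈ 𝔥 → B X Y ∈ 𝔥)
    (X : H →₀ ℚ) (hX : X ∈ 𝔥) (c : H ⧸ kerMu ω) :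
    X.filter (fun z => (QuotientAddGroup.mk z : H ⧸ kerMu ω) = c) ∈ 𝔥 := by
  induction hn : X.support.card using Nat.strong_induction_on generalizing X with
  | _ n ih =>
  obtain ⟨w, rfl⟩ := QuotientAddGroup.mk_surjective c
  by_cases hall : ∀ z ∈ X.support, (QuotientAddGroup.mk z : H ⧸ kerMu ω) = QuotientAddGroup.mk w
  · rwa [(Finsupp.filter_eq_self_iff _ X).2 fun z hz => hall z (Finsupp.mem_support_iff.2 hz)]
  push Not at hall
  obtain ⟨z, hz, hzw⟩ := hall
  have hanti : ∀ x y : H, ω x y = -ω y x := fun x y =>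
    ((show LinearMap.IsAlt ω from halt).neg y x).symm
  obtain ⟨a, ha⟩ : ∃ a, ω a z ≠ ω a w := by
    by_contra! hcon
    apply hzw
    rw [QuotientAddGroup.eq]
    intro y
    simp [hanti z y, hanti w y, hcon y]
  -- The eigenvalue of the diagonal operator attached to `a`, as a function of the basis index.
  set l : H → ℚ := fun v => -2 * (ω a v : ℚ) ^ 3 with hl
  have hne : l w - l z ≠ 0 := by
    intro h
    have h3 : (ω a z) ^ 3 = (ω a w) ^ 3 := by
      have : (ω a z : ℚ) ^ 3 = (ω a w : ℚ) ^ 3 := by simp only [hl] at h; linarith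
      exact_mod_cast this
    exact ha ((Odd.strictMono_pow (by decide : Odd 3)).injective h3)
  set Y : H →₀ ℚ := (l w - l z)⁻¹ •
    (B (single (-(a + a)) 1) (B (single a 1) (B (single a 1) X)) - l z • X) with hY
  have hYmem : Y ∈ 𝔥 := 𝔥.smul_mem _
    (𝔥.sub_mem (hIdeal _ _ (hIdeal _ _ (hIdeal _ _ hX))) (𝔥.smul_mem _ hX))
  have hYv : ∀ v, Y v = (l w - l z)⁻¹ * ((l v - l z) * X v) := by
    intro v
    simp only [hY, Finsupp.smul_apply, Finsupp.sub_apply, smul_eq_mul,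
      bracket_triple_apply ω halt B hB, hl]
    ring
  have hlt : Y.support.card < n := by
    rw [← hn]
    apply Finset.card_lt_card
    rw [Finset.ssubset_iff_of_subset]
    · exact ⟨z, hz, by simp [hYv]⟩
    · intro v hv
      rw [Finsupp.mem_support_iff] at hv ⊢
      intro h0
      exact hv (by rw [hYv, h0]; ring)
  have hfilter : X.filter (fun v => (QuotientAddGroup.mk v : H ⧸ kerMu ω) = QuotientAddGroup.mk w)
      = Y.filter (fun v => (QuotientAddGroup.mk v : H ⧸ kerMu ω) = QuotientAddGroup.mk w) := by
    ext v
    by_cases hv : (QuotientAddGroup.mk v : H ⧸ kerMu ω) = QuotientAddGroup.mk w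
    · rw [Finsupp.filter_apply, Finsupp.filter_apply, if_pos hv, if_pos hv, hYv]
      have hvw : ω a v = ω a w := by
        rw [QuotientAddGroup.eq] at hv
        have h := hv a
        rw [map_add, map_neg, LinearMap.add_apply, LinearMap.neg_apply] at h
        rw [hanti a v, hanti a w]
        linarith
      have hlv : l v = l w := by simp only [hl, hvw]
      rw [hlv, inv_mul_cancel_left₀ hne]
    · rw [Finsupp.filter_apply, Finsupp.filter_apply, if_neg hv, if_neg hv]
  rw [hfilter]
  exact ih _ hlt Y hYmem rfl
end

section
/- (Homogeneity of an ideal) Let 𝔥 be an ideal of ℚH. For all x, y ∈ H with x ∉ ker μ and y ∉ ker μ, one has T(-x)(𝔥 ∩ ℚx̄) = T(-y)(𝔥 ∩ ℚȳ). -/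
/-!
On the coset `x + ker μ` the value `⟨z, -⟩` is constant, so bracketing with `[z]` acts on `ℚx̄` as
`⟨z, x⟩ • T(z)`. Hence if `⟨y, x⟩ ≠ 0`, bracketing with `[y - x]` shows that `T(y - x)` maps
`𝔥 ∩ ℚx̄` into `𝔥 ∩ ℚȳ`, which gives `T(-x)(𝔥 ∩ ℚx̄) ⊆ T(-y)(𝔥 ∩ ℚȳ)` (`map_transl_le`).
For general `x, y ∉ ker μ` there is `z` with `⟨z, x⟩ ≠ 0` and `⟨z, y⟩ ≠ 0`, since a group is not the
union of two proper subgroups, and the inclusion passes through `z` in both directions.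
-/

open Finsupp

variable {H : Type*} [AddCommGroup H]

/-- The translation operator `T(x)` on `ℚH = H →₀ ℚ`, the `ℚ`-linear map with
`T(x)([y]) = [x + y]`. -/
noncomputable def transl (x : H) : (H →₀ ℚ) →ₗ[ℚ] (H →₀ ℚ) :=
  Finsupp.lmapDomain ℚ ℚ (fun y => x + y)

lemma form_swap (ω : H →ₗ[ℤ] H →ₗ[ℤ] ℤ) (halt : ∀ x : H, ω x x = 0) (x y : H) :
    ω x y = - ω y x := by
  have h := halt (x + y)
  simp only [map_add, LinearMap.add_apply, halt] at h
  linarith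

lemma transl_transl (a b : H) (u : H →₀ ℚ) : transl a (transl b u) = transl (a + b) u := by
  simp only [transl, Finsupp.lmapDomain_apply, ← Finsupp.mapDomain_comp]
  congr 1
  funext v
  simp [add_assoc]

/-- Bracketing with `[z]` acts on `ℚx̄` as `⟨z, x⟩ • T(z)`. -/
lemma bracket_single_eq (ω : H →ₗ[ℤ] H →ₗ[ℤ] ℤ) (halt : ∀ x : H, ω x x = 0)
    (B : (H →₀ ℚ) →ₗ[ℚ] (H →₀ ℚ) →ₗ[ℚ] (H →₀ ℚ))
    (hB : ∀ x y : H,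
      B (single x 1) (single y 1) = (ω x y : ℚ) • single (x + y) (1 : ℚ))
    (x z : H) (u : H →₀ ℚ)
    (hu : u ∈ Finsupp.supported ℚ ℚ ((x + ·) '' (kerMu ω : Set H))) :
    B (single z 1) u = (ω z x : ℚ) • transl z u := by
  rw [Finsupp.supported_eq_span_single] at hu
  have key : Set.EqOn (B (single z 1)) ((ω z x : ℚ) • transl z : (H →₀ ℚ) →ₗ[ℚ] (H →₀ ℚ))
      ((fun i => single i (1 : ℚ)) '' ((x + ·) '' (kerMu ω : Set H))) := by
    rintro _ ⟨_, ⟨k, hk, rfl⟩, rfl⟩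
    have hzk : ω z k = 0 := by
      rw [form_swap ω halt, show ω k z = 0 from hk z, neg_zero]
    simp only [hB, LinearMap.smul_apply, transl, Finsupp.lmapDomain_apply,
      Finsupp.mapDomain_single, map_add, hzk, add_zero]
  exact LinearMap.eqOn_span key hu

/-- The inclusion between translated pieces when the two classes pair nontrivially. -/
lemma map_transl_le (ω : H →ₗ[ℤ] H →ₗ[ℤ] ℤ) (halt : ∀ x : H, ω x x = 0)
    (B : (H →₀ ℚ) →ₗ[ℚ] (H →₀ ℚ) →ₗ[ℚ] (H →₀ ℚ))
    (hB : ∀ x y : H,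
      B (single x 1) (single y 1) = (ω x y : ℚ) • single (x + y) (1 : ℚ))
    (𝔥 : Submodule ℚ (H →₀ ℚ))
    (hIdeal : ∀ X Y : H →₀ ℚ, Y ∈ 𝔥 → B X Y ∈ 𝔥)
    (x y : H) (hyx : ω y x ≠ 0) :
    Submodule.map (transl (-x))
        (𝔥 ⊓ Finsupp.supported ℚ ℚ ((x + ·) '' (kerMu ω : Set H)))
      ≤ Submodule.map (transl (-y))
        (𝔥 ⊓ Finsupp.supported ℚ ℚ ((y + ·) '' (kerMu ω : Set H))) := by
  rintro _ ⟨u, ⟨hu, hus⟩, rfl⟩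
  refine ⟨transl (y - x) u, ⟨?_, ?_⟩, ?_⟩
  · have h := hIdeal (single (y - x) 1) u hu
    rw [bracket_single_eq ω halt B hB x (y - x) u hus] at h
    have hne : (ω (y - x) x : ℚ) ≠ 0 := by
      simpa [halt] using hyx
    exact (Submodule.smul_mem_iff _ hne).1 h
  · have hle : Submodule.map (transl (y - x))
        (Finsupp.supported ℚ ℚ ((x + ·) '' (kerMu ω : Set H)))
        ≤ Finsupp.supported ℚ ℚ ((y + ·) '' (kerMu ω : Set H)) := by
      rw [transl, Finsupp.lmapDomain_supported, Set.image_image]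
      apply Finsupp.supported_mono
      rintro _ ⟨k, hk, rfl⟩
      exact ⟨k, hk, by simp only; abel⟩
    exact hle ⟨u, hus, rfl⟩
  · rw [transl_transl]
    congr 2
    abel

/-- Two elements outside `ker μ` pair nontrivially with a common element. -/
lemma exists_common_pairing (ω : H →ₗ[ℤ] H →ₗ[ℤ] ℤ) (x y : H)
    (hx : x ∉ kerMu ω) (hy : y ∉ kerMu ω) : ∃ z, ω x z ≠ 0 ∧ ω y z ≠ 0 := by
  obtain ⟨a, ha⟩ : ∃ a, ω x a ≠ 0 := not_forall.1 hx
  obtain ⟨b, hb⟩ : ∃ b, ω y b ≠ 0 := not_forall.1 hy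
  by_cases hya : ω y a = 0
  · by_cases hxb : ω x b = 0
    · exact ⟨a + b, by simpa [hxb] using ha, by simpa [hya] using hb⟩
    · exact ⟨b, hxb, hb⟩
  · exact ⟨a, ha, hya⟩

/-- **Homogeneity of an ideal.** Let `𝔥` be an ideal of `ℚH`.
For `x, y ∈ H \ ker μ`, one has `T(-x)(𝔥 ∩ ℚx̄) = T(-y)(𝔥 ∩ ℚȳ)`. -/
theorem ideal_homogeneity
    (ω : H →ₗ[ℤ] H →ₗ[ℤ] ℤ) (halt : ∀ x : H, ω x x = 0)
    (B : (H →₀ ℚ) →ₗ[ℚ] (H →₀ ℚ) →ₗ[ℚ] (H →₀ ℚ))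
    (hB : ∀ x y : H,
      B (single x 1) (single y 1) = (ω x y : ℚ) • single (x + y) (1 : ℚ))
    (𝔥 : Submodule ℚ (H →₀ ℚ))
    (hIdeal : ∀ X Y : H →₀ ℚ, Y ∈ 𝔥 → B X Y ∈ 𝔥)
    (x y : H) (hx : x ∉ kerMu ω) (hy : y ∉ kerMu ω) :
    Submodule.map (transl (-x))
        (𝔥 ⊓ Finsupp.supported ℚ ℚ ((x + ·) '' (kerMu ω : Set H)))
      = Submodule.map (transl (-y))
        (𝔥 ⊓ Finsupp.supported ℚ ℚ ((y + ·) '' (kerMu ω : Set H))) := by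
  obtain ⟨z, hxz, hyz⟩ := exists_common_pairing ω x y hx hy
  have hzx : ω z x ≠ 0 := by rw [form_swap ω halt]; exact neg_ne_zero.2 hxz
  have hzy : ω z y ≠ 0 := by rw [form_swap ω halt]; exact neg_ne_zero.2 hyz
  have step := map_transl_le ω halt B hB 𝔥 hIdeal
  exact le_antisymm ((step x z hzx).trans (step z y hyz)) ((step y z hzy).trans (step z x hxz))
end

section
/- (Classification of ideals: existence) Let 𝔥 be an ideal of ℚH. Then there exists a pair (V₀, V) such that: (1) V₀ and V are ℚ-subspaces of ℚ(ker μ); (2) V has the ker μ-stability, i.e., T(v)(V) ⊆ V for all v ∈ ker μ (and V = 0 if μ = 0); and (3) 𝔥 = V₀ ⊕ ⊕_{x̄ ∈ (H/ker μ) \ {0̄}} T(x̄)(V), where for a coset x̄ = x + ker μ ≠ 0̄ one sets T(x̄)(V) := T(x)(V), which is well-defined by (2). -/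
/-!
The composite `ad[-2x] ∘ ad[x] ∘ ad[x]` is diagonal, with eigenvalue `-2⟨x,y⟩³` on `[y]`. These
operators preserve the ideal `𝔥`, commute, and separate the cosets of `ker μ`, so `𝔥` is graded by
`H / ker μ` (`filter_mem_ideal`). In degree `ȳ` the operator `ad[x]` is `⟨x,y⟩ T(x)`; since `H` is
not a union of two proper subgroups, any two nonzero degrees are linked by at most two such
translations with nonzero coefficient, so the components of `𝔥` in nonzero degrees are all
translates of a single `ker μ`-stable subspace `V` of `ℚ(ker μ)` (`transl_mem_of_transl_mem`,
`stablePart`). `V₀` is the component of degree zero.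
-/

open Finsupp

variable {H : Type*} [AddCommGroup H]

open Classical in
/-- The family of graded pieces of `V₀ ⊕ ⊕_{x̄ ≠ 0̄} T(x̄)(V)`: the piece of degree
`0̄` is `V₀`, and the piece of degree `x̄ ≠ 0̄` is `T(x̄)(V) := T(x)(V)` for a
representative `x` of the coset `x̄` (well-defined when `V` is `ker μ`-stable). -/
noncomputable def piecesOf (ω : H →ₗ[ℤ] H →ₗ[ℤ] ℤ) (V₀ V : Submodule ℚ (H →₀ ℚ)) :
    H ⧸ kerMu ω → Submodule ℚ (H →₀ ℚ) :=
  fun c => if c = 0 then V₀ else Submodule.map (transl (Quotient.out c)) V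

/-- The diagonal operator `[y] ↦ f y • [y]` on `ℚH`. -/
noncomputable def diagOp (f : H → ℚ) : (H →₀ ℚ) →ₗ[ℚ] (H →₀ ℚ) :=
  Finsupp.linearCombination ℚ (fun y => single y (f y))

theorem diagOp_apply (f : H → ℚ) (Y : H →₀ ℚ) (z : H) : diagOp f Y z = f z * Y z := by
  induction Y using Finsupp.induction_linear with
  | zero => simp
  | add a b ha hb => simp [ha, hb, mul_add]
  | single y r =>
    classical
    simp only [diagOp, Finsupp.linearCombination_single, Finsupp.smul_apply, smul_eq_mul,
      Finsupp.single_apply]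
    split_ifs with h
    · subst h; ring
    · simp

theorem transl_single (x y : H) (r : ℚ) : transl x (single y r) = single (x + y) r := by
  simp [transl]

theorem transl_transl_s7 (x y : H) (X : H →₀ ℚ) : transl x (transl y X) = transl (x + y) X := by
  induction X using Finsupp.induction_linear with
  | zero => simp
  | add a b ha hb => simp [ha, hb]
  | single z r => simp [transl_single, add_assoc]

theorem transl_zero (X : H →₀ ℚ) : transl (0 : H) X = X := by
  induction X using Finsupp.induction_linear with
  | zero => simp
  | add a b ha hb => simp [ha, hb]
  | single z r => simp [transl_single]

theorem transl_mem_supported (x : H) {S R : Set H} (h : ∀ s ∈ S, x + s ∈ R) {X : H →₀ ℚ}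
    (hX : X ∈ Finsupp.supported ℚ ℚ S) : transl x X ∈ Finsupp.supported ℚ ℚ R := by
  classical
  rw [Finsupp.mem_supported] at hX ⊢
  intro z hz
  obtain ⟨s, hs, rfl⟩ := Finset.mem_image.1 (Finsupp.mapDomain_support hz)
  exact h s (hX hs)

/-- The annihilators of `y` and of `z` are proper subgroups, and `H` is not the union of two
proper subgroups. -/
theorem exists_pair_ne_zero (ω : H →ₗ[ℤ] H →ₗ[ℤ] ℤ) {y z : H}
    (hy : ∃ w, ω w y ≠ 0) (hz : ∃ w, ω w z ≠ 0) : ∃ w, ω w y ≠ 0 ∧ ω w z ≠ 0 := by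
  obtain ⟨a, ha⟩ := hy
  obtain ⟨b, hb⟩ := hz
  by_cases h1 : ω a z = 0
  · by_cases h2 : ω b y = 0
    · exact ⟨a + b, by simpa [h2] using ha, by simpa [h1] using hb⟩
    · exact ⟨b, h2, hb⟩
  · exact ⟨a, ha, h1⟩

theorem pairing_antisymm {ω : H →ₗ[ℤ] H →ₗ[ℤ] ℤ} (halt : ∀ x : H, ω x x = 0) (x y : H) :
    ω x y = - ω y x := by
  have h := halt (x + y)
  simp only [map_add, LinearMap.add_apply, halt] at h
  linarith

theorem not_mem_kerMu {ω : H →ₗ[ℤ] H →ₗ[ℤ] ℤ} (halt : ∀ x : H, ω x x = 0) {y : H}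
    (hy : y ∉ kerMu ω) : ∃ w, ω w y ≠ 0 := by
  by_contra! h
  exact hy fun w => by rw [pairing_antisymm halt, h w, neg_zero]

section Ideal

variable {ω : H →ₗ[ℤ] H →ₗ[ℤ] ℤ} {B : (H →₀ ℚ) →ₗ[ℚ] (H →₀ ℚ) →ₗ[ℚ] (H →₀ ℚ)}
  {𝔥 : Submodule ℚ (H →₀ ℚ)}

/-- `ad[-2x] ∘ ad[x] ∘ ad[x]` multiplies `[y]` by `-2⟨x,y⟩³`. The exponent is odd, so these
operators, unlike `ad[-x] ∘ ad[x]`, also tell `y` from `-y`. -/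
theorem diagOp_cube_mem (halt : ∀ x : H, ω x x = 0)
    (hB : ∀ x y : H,
      B (single x 1) (single y 1) = (ω x y : ℚ) • single (x + y) (1 : ℚ))
    (hIdeal : ∀ X Y : H →₀ ℚ, Y ∈ 𝔥 → B X Y ∈ 𝔥) (x : H) {Y : H →₀ ℚ} (hY : Y ∈ 𝔥) :
    diagOp (fun y => (ω x y : ℚ) ^ 3) Y ∈ 𝔥 := by
  have key : B (single (-x + -x) 1) (B (single x 1) (B (single x 1) Y))
      = (-2 : ℚ) • diagOp (fun y => (ω x y : ℚ) ^ 3) Y := by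
    clear hY
    induction Y using Finsupp.induction_linear with
    | zero => simp
    | add a b ha hb => simp only [map_add, ha, hb, smul_add]
    | single y r =>
      have h1 : single y r = r • single y (1 : ℚ) := by simp
      have h2 : -x + -x + (x + (x + y)) = y := by abel
      rw [h1]
      simp only [map_smul, hB, h2, diagOp, Finsupp.linearCombination_single, map_add, map_neg,
        LinearMap.add_apply, LinearMap.neg_apply, halt, one_smul]
      simp only [Finsupp.smul_single, smul_eq_mul]
      congr 1
      push_cast
      ring
  have h := 𝔥.smul_mem (-2 : ℚ)⁻¹
    (hIdeal (single (-x + -x) 1) _ (hIdeal (single x 1) _ (hIdeal (single x 1) _ hY)))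
  rwa [key, smul_smul, inv_mul_cancel₀ (by norm_num), one_smul] at h

/-- A product of the factors `(⟨x,·⟩³ - ⟨x,s⟩³) / (⟨x,z⟩³ - ⟨x,s⟩³)`, one for each `s ∈ S`, gives a
diagonal operator preserving the ideal that is the identity on the coset of `z` and kills every
`[s]`, `s ∈ S`. -/
theorem exists_diagOp_separating (halt : ∀ x : H, ω x x = 0)
    (hB : ∀ x y : H,
      B (single x 1) (single y 1) = (ω x y : ℚ) • single (x + y) (1 : ℚ))
    (hIdeal : ∀ X Y : H →₀ ℚ, Y ∈ 𝔥 → B X Y ∈ 𝔥) (z : H) (S : Finset H)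
    (hS : ∀ s ∈ S, s - z ∉ kerMu ω) :
    ∃ f : H → ℚ, (∀ y, y - z ∈ kerMu ω → f y = 1) ∧ (∀ s ∈ S, f s = 0) ∧
      ∀ Y ∈ 𝔥, diagOp f Y ∈ 𝔥 := by
  classical
  induction S using Finset.induction_on with
  | empty =>
    refine ⟨fun _ => 1, by simp, by simp, fun Y hY => ?_⟩
    have : diagOp (fun _ => 1) Y = Y := by ext y; simp [diagOp_apply]
    rwa [this]
  | insert s S _ ih =>
    obtain ⟨f, hf1, hf0, hf⟩ := ih fun t ht => hS t (Finset.mem_insert_of_mem ht)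
    obtain ⟨x, hx⟩ := not_mem_kerMu halt (hS s (Finset.mem_insert_self s S))
    have hne : (ω x z : ℚ) ^ 3 - (ω x s : ℚ) ^ 3 ≠ 0 := by
      intro h
      have h3 : (ω x z) ^ 3 = (ω x s) ^ 3 := by exact_mod_cast sub_eq_zero.1 h
      have h4 : ω x z = ω x s := (Odd.strictMono_pow (by decide : Odd 3)).injective h3
      exact hx (by rw [map_sub, h4, sub_self])
    refine ⟨fun y => ((ω x z : ℚ) ^ 3 - (ω x s : ℚ) ^ 3)⁻¹ *
      ((ω x y : ℚ) ^ 3 - (ω x s : ℚ) ^ 3) * f y, fun y hy => ?_, fun t ht => ?_, fun Y hY => ?_⟩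
    · have h5 : ω x y = ω x z := by
        have h6 := hy x
        rw [pairing_antisymm halt, map_sub] at h6
        linarith
      simp only [h5, hf1 y hy, mul_one]
      exact inv_mul_cancel₀ hne
    · rcases Finset.mem_insert.1 ht with rfl | ht
      · simp
      · simp [hf0 t ht]
    · have hfY := hf Y hY
      have h7 := 𝔥.smul_mem ((ω x z : ℚ) ^ 3 - (ω x s : ℚ) ^ 3)⁻¹
        (𝔥.sub_mem (diagOp_cube_mem halt hB hIdeal x hfY) (𝔥.smul_mem ((ω x s : ℚ) ^ 3) hfY))
      convert h7 using 1
      ext y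
      simp only [diagOp_apply, Finsupp.smul_apply, Finsupp.sub_apply, smul_eq_mul]
      ring

open Classical in
/-- Ideals are graded by `H / ker μ`. -/
theorem filter_mem_ideal (halt : ∀ x : H, ω x x = 0)
    (hB : ∀ x y : H,
      B (single x 1) (single y 1) = (ω x y : ℚ) • single (x + y) (1 : ℚ))
    (hIdeal : ∀ X Y : H →₀ ℚ, Y ∈ 𝔥 → B X Y ∈ 𝔥) (z : H) {Y : H →₀ ℚ} (hY : Y ∈ 𝔥) :
    Y.filter (fun y => y - z ∈ kerMu ω) ∈ 𝔥 := by
  obtain ⟨f, hf1, hf0, hf⟩ := exists_diagOp_separating halt hB hIdeal z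
    (Y.support.filter fun s => s - z ∉ kerMu ω) (fun s hs => (Finset.mem_filter.1 hs).2)
  convert hf Y hY using 1
  ext y
  rw [diagOp_apply]
  by_cases hy : y - z ∈ kerMu ω
  · rw [Finsupp.filter_apply, if_pos hy, hf1 y hy, one_mul]
  · rw [Finsupp.filter_apply, if_neg hy]
    by_cases h0 : Y y = 0
    · rw [h0, mul_zero]
    · rw [hf0 y (Finset.mem_filter.2 ⟨Finsupp.mem_support_iff.2 h0, hy⟩), zero_mul]

/-- On the coset of `y` the operator `ad[x]` is `⟨x,y⟩ T(x)`, hence `T(x)` itself preserves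
membership as soon as `⟨x,y⟩ ≠ 0`. -/
theorem transl_mem_of_pairing_ne_zero (halt : ∀ x : H, ω x x = 0)
    (hB : ∀ x y : H,
      B (single x 1) (single y 1) = (ω x y : ℚ) • single (x + y) (1 : ℚ))
    (hIdeal : ∀ X Y : H →₀ ℚ, Y ∈ 𝔥 → B X Y ∈ 𝔥) {x y : H} (hxy : ω x y ≠ 0)
    {X : H →₀ ℚ} (hX : X ∈ Finsupp.supported ℚ ℚ (kerMu ω : Set H)) (h : transl y X ∈ 𝔥) :
    transl (x + y) X ∈ 𝔥 := by
  have key : B (single x 1) (transl y X) = (ω x y : ℚ) • transl (x + y) X := by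
    clear h
    rw [Finsupp.supported_eq_span_single] at hX
    induction hX using Submodule.span_induction with
    | zero => simp
    | add a b _ _ ha hb => simp only [map_add, ha, hb, smul_add]
    | smul r a _ ha => simp only [map_smul, ha, smul_comm r]
    | mem a ha =>
      obtain ⟨v, hv, rfl⟩ := ha
      have hxv : ω x v = 0 := by rw [pairing_antisymm halt, hv x, neg_zero]
      simp only [transl_single, hB, map_add, hxv, add_zero, add_assoc]
  have h1 := 𝔥.smul_mem (ω x y : ℚ)⁻¹ (hIdeal (single x 1) _ h)
  rwa [key, smul_smul, inv_mul_cancel₀ (by exact_mod_cast hxy), one_smul] at h1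

/-- All components of an ideal in nonzero degrees are translates of one another: a translation
between two cosets that pair to zero passes through a third coset pairing nontrivially with both. -/
theorem transl_mem_of_transl_mem (halt : ∀ x : H, ω x x = 0)
    (hB : ∀ x y : H,
      B (single x 1) (single y 1) = (ω x y : ℚ) • single (x + y) (1 : ℚ))
    (hIdeal : ∀ X Y : H →₀ ℚ, Y ∈ 𝔥 → B X Y ∈ 𝔥) {y z : H} (hy : y ∉ kerMu ω)
    (hz : z ∉ kerMu ω) {X : H →₀ ℚ} (hX : X ∈ Finsupp.supported ℚ ℚ (kerMu ω : Set H))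
    (h : transl y X ∈ 𝔥) : transl z X ∈ 𝔥 := by
  obtain ⟨w, hwy, hwz⟩ := exists_pair_ne_zero ω (not_mem_kerMu halt hy) (not_mem_kerMu halt hz)
  have h1 : transl w X ∈ 𝔥 := by
    have := transl_mem_of_pairing_ne_zero (x := w - y) halt hB hIdeal (y := y)
      (by simpa [halt] using hwy) hX h
    rwa [sub_add_cancel] at this
  have h2 := transl_mem_of_pairing_ne_zero (x := z - w) halt hB hIdeal (y := w)
      (by simpa [halt, pairing_antisymm halt z w] using hwz) hX h1
  rwa [sub_add_cancel] at h2

end Ideal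

/-- The subspace `V` attached to `𝔥`: those elements of `ℚ(ker μ)` all of whose translates to
nonzero degrees lie in `𝔥`. When `μ = 0` there is no nonzero degree, and the last condition
forces `V = 0`. -/
noncomputable def stablePart (ω : H →ₗ[ℤ] H →ₗ[ℤ] ℤ) (𝔥 : Submodule ℚ (H →₀ ℚ)) :
    Submodule ℚ (H →₀ ℚ) where
  carrier := {X | X ∈ Finsupp.supported ℚ ℚ (kerMu ω : Set H) ∧
    (∀ y, y ∉ kerMu ω → transl y X ∈ 𝔥) ∧ (ω = 0 → X = 0)}
  add_mem' := by
    rintro a b ⟨ha, ha', ha''⟩ ⟨hb, hb', hb''⟩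
    refine ⟨add_mem ha hb, fun y hy => ?_, fun h => by rw [ha'' h, hb'' h, add_zero]⟩
    rw [map_add]
    exact add_mem (ha' y hy) (hb' y hy)
  zero_mem' := ⟨zero_mem _, fun y _ => by simp, fun _ => rfl⟩
  smul_mem' := by
    rintro r a ⟨ha, ha', ha''⟩
    refine ⟨Submodule.smul_mem _ r ha, fun y hy => ?_, fun h => by rw [ha'' h, smul_zero]⟩
    rw [map_smul]
    exact Submodule.smul_mem _ r (ha' y hy)

theorem out_not_mem_kerMu (ω : H →ₗ[ℤ] H →ₗ[ℤ] ℤ) {c : H ⧸ kerMu ω} (hc : c ≠ 0) :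
    Quotient.out c ∉ kerMu ω := by
  intro h
  apply hc
  rw [← QuotientAddGroup.out_eq' c]
  exact (QuotientAddGroup.eq_zero_iff _).2 h

theorem mk_eq_iff_sub_out_mem (ω : H →ₗ[ℤ] H →ₗ[ℤ] ℤ) (c : H ⧸ kerMu ω) (y : H) :
    (y : H ⧸ kerMu ω) = c ↔ y - Quotient.out c ∈ kerMu ω := by
  rw [← QuotientAddGroup.eq_iff_sub_mem, QuotientAddGroup.out_eq']

theorem piecesOf_le_supported (ω : H →ₗ[ℤ] H →ₗ[ℤ] ℤ) {V₀ V : Submodule ℚ (H →₀ ℚ)}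
    (hV₀ : V₀ ≤ Finsupp.supported ℚ ℚ (kerMu ω : Set H))
    (hV : V ≤ Finsupp.supported ℚ ℚ (kerMu ω : Set H)) (c : H ⧸ kerMu ω) :
    piecesOf ω V₀ V c ≤ Finsupp.supported ℚ ℚ {y : H | (y : H ⧸ kerMu ω) = c} := by
  unfold piecesOf
  split_ifs with hc
  · refine hV₀.trans (Finsupp.supported_mono fun y hy => ?_)
    rw [Set.mem_ofPred_eq, hc]
    exact (QuotientAddGroup.eq_zero_iff _).2 hy
  · rintro _ ⟨X, hX, rfl⟩
    refine transl_mem_supported _ (fun s hs => ?_) (hV hX)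
    rw [Set.mem_ofPred_eq, mk_eq_iff_sub_out_mem, add_sub_cancel_left]
    exact hs

/-- **Classification of ideals: existence.** For any ideal `𝔥` of
`ℚH` there is a pair `(V₀, V)` of subspaces of `ℚ(ker μ)` such that `V` is
`ker μ`-stable (`V = 0` if `μ = 0`) and
`𝔥 = V₀ ⊕ ⊕_{x̄ ∈ (H/ker μ) \ {0̄}} T(x̄)(V)` (the sum being direct). -/
theorem ideal_classification_existence
    (ω : H →ₗ[ℤ] H →ₗ[ℤ] ℤ) (halt : ∀ x : H, ω x x = 0)
    (B : (H →₀ ℚ) →ₗ[ℚ] (H →₀ ℚ) →ₗ[ℚ] (H →₀ ℚ))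
    (hB : ∀ x y : H,
      B (single x 1) (single y 1) = (ω x y : ℚ) • single (x + y) (1 : ℚ))
    (𝔥 : Submodule ℚ (H →₀ ℚ))
    (hIdeal : ∀ X Y : H →₀ ℚ, Y ∈ 𝔥 → B X Y ∈ 𝔥) :
    ∃ V₀ V : Submodule ℚ (H →₀ ℚ),
      V₀ ≤ Finsupp.supported ℚ ℚ (kerMu ω : Set H) ∧
      V ≤ Finsupp.supported ℚ ℚ (kerMu ω : Set H) ∧
      (∀ v ∈ kerMu ω, Submodule.map (transl v) V ≤ V) ∧
      (ω = 0 → V = ⊥) ∧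
      𝔥 = (⨆ c : H ⧸ kerMu ω, piecesOf ω V₀ V c) ∧
      (∀ c : H ⧸ kerMu ω, Disjoint (piecesOf ω V₀ V c)
        (⨆ d : H ⧸ kerMu ω, ⨆ _ : d ≠ c, piecesOf ω V₀ V d)) := by
  classical
  have hV₀ : 𝔥 ⊓ Finsupp.supported ℚ ℚ (kerMu ω : Set H) ≤
      Finsupp.supported ℚ ℚ (kerMu ω : Set H) := inf_le_right
  have hV : stablePart ω 𝔥 ≤ Finsupp.supported ℚ ℚ (kerMu ω : Set H) := fun X hX => hX.1
  refine ⟨𝔥 ⊓ Finsupp.supported ℚ ℚ (kerMu ω : Set H), stablePart ω 𝔥, hV₀, hV, ?_, ?_, ?_, ?_⟩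
  · rintro v hv _ ⟨X, ⟨hX, hX', hX''⟩, rfl⟩
    refine ⟨transl_mem_supported _ (fun s hs => add_mem hv hs) hX, fun y hy => ?_,
      fun h => by rw [hX'' h, map_zero]⟩
    rw [transl_transl_s7]
    exact hX' _ fun h => hy ((add_mem_cancel_right hv).1 h)
  · exact fun h => (Submodule.eq_bot_iff _).2 fun X hX => hX.2.2 h
  · apply le_antisymm
    · intro Y hY
      -- `Y` is the sum of its homogeneous components over the cosets met by its support.
      have hsum : Y = ∑ c ∈ Y.support.image (fun y : H => (y : H ⧸ kerMu ω)),
          Y.filter (fun y => y - Quotient.out c ∈ kerMu ω) := by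
        ext y
        simp only [Finsupp.finsetSum_apply, Finsupp.filter_apply, ← mk_eq_iff_sub_out_mem,
          Finset.sum_ite_eq]
        split_ifs with h
        · rfl
        · by_contra h0
          exact h (Finset.mem_image_of_mem _ (Finsupp.mem_support_iff.2 h0))
      rw [hsum]
      refine Submodule.sum_mem _ fun c _ => Submodule.mem_iSup_of_mem c ?_
      have hmem := filter_mem_ideal halt hB hIdeal (Quotient.out c) hY
      have hsupp : Y.filter (fun y => y - Quotient.out c ∈ kerMu ω) ∈
          Finsupp.supported ℚ ℚ {y : H | y - Quotient.out c ∈ kerMu ω} := by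
        rw [Finsupp.mem_supported]
        intro y hy
        rw [Finsupp.support_filter] at hy
        exact (Finset.mem_filter.1 hy).2
      generalize Y.filter (fun y => y - Quotient.out c ∈ kerMu ω) = Z at hmem hsupp
      unfold piecesOf
      split_ifs with hc
      · refine ⟨hmem, Finsupp.supported_mono (fun y hy => ?_) hsupp⟩
        have hy' := (mk_eq_iff_sub_out_mem ω c y).2 hy
        rw [hc] at hy'
        exact (QuotientAddGroup.eq_zero_iff _).1 hy'
      · have hout := out_not_mem_kerMu ω hc
        have hback : transl (Quotient.out c) (transl (-Quotient.out c) Z) = Z := by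
          rw [transl_transl_s7, add_neg_cancel, transl_zero]
        have hX : transl (-Quotient.out c) Z ∈ Finsupp.supported ℚ ℚ (kerMu ω : Set H) :=
          transl_mem_supported _ (fun s hs => by
            rw [neg_add_eq_sub]; exact hs) hsupp
        refine ⟨transl (-Quotient.out c) Z, ⟨hX, fun y hy => ?_, fun h => ?_⟩, hback⟩
        · exact transl_mem_of_transl_mem halt hB hIdeal hout hy hX (by rwa [hback])
        · exact absurd (fun y => by simp [h]) hout
    · refine iSup_le fun c => ?_
      unfold piecesOf
      split_ifs with hc
      · exact inf_le_left
      · rintro _ ⟨X, hX, rfl⟩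
        exact hX.2.1 _ (out_not_mem_kerMu ω hc)
  · intro c
    refine Disjoint.mono (piecesOf_le_supported ω hV₀ hV c)
      (iSup₂_le fun d hd => (piecesOf_le_supported ω hV₀ hV d).trans
        (Finsupp.supported_mono (t := {y : H | (y : H ⧸ kerMu ω) ≠ c}) ?_))
      (Finsupp.disjoint_supported_supported ?_)
    · rintro y rfl
      exact hd
    · exact Set.disjoint_left.2 fun y hy hy' => hy' hy
end

section
/- The center of the homological Goldman Lie algebra equals the span of the kernel of μ: 𝔷(ℚH) = ℚ(ker μ), i.e., an element Z ∈ ℚH satisfies [Z, X] = 0 for all X ∈ ℚH if and only if Z lies in the ℚ-span of {[v] : v ∈ ker μ}. -/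
/-!
Bracketing with a basis element `[y]` translates supports by `y` injectively, so no cancellation
occurs: the coefficient of `[x + y]` in `[Z, [y]]` is `Z x * ⟨x, y⟩` (`bracket_single_apply`).
Hence `Z` is central iff `Z x * ⟨x, y⟩ = 0` for all `x` and `y`, i.e. iff every `x` in the support
of `Z` lies in `ker μ`.
-/

open Finsupp

variable {H : Type*} [AddCommGroup H]

theorem bracket_single_apply
    (ω : H →ₗ[ℤ] H →ₗ[ℤ] ℤ)
    (B : (H →₀ ℚ) →ₗ[ℚ] (H →₀ ℚ) →ₗ[ℚ] (H →₀ ℚ))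
    (hB : ∀ x y : H,
      B (single x 1) (single y 1) = (ω x y : ℚ) • single (x + y) (1 : ℚ))
    (Z : H →₀ ℚ) (x y : H) :
    B Z (single y 1) (x + y) = Z x * (ω x y : ℚ) := by
  classical
  induction Z using Finsupp.induction_linear with
  | zero => simp
  | add f g hf hg => simp [hf, hg, add_mul]
  | single a c =>
    have hc : single a c = c • single a (1 : ℚ) := by simp
    rw [hc, map_smul, LinearMap.smul_apply, hB]
    by_cases h : a = x
    · subst h
      simp
    · simp [Finsupp.single_apply, h]

/-- The center of the homological Goldman Lie algebra is
`𝔷(ℚH) = ℚ(ker μ)`: an element `Z` satisfies `[Z, X] = 0` for all `X` iff `Z`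
lies in the `ℚ`-span of `{[v] : v ∈ ker μ}`. -/
theorem center_eq_span_kerMu
    (ω : H →ₗ[ℤ] H →ₗ[ℤ] ℤ) (halt : ∀ x : H, ω x x = 0)
    (B : (H →₀ ℚ) →ₗ[ℚ] (H →₀ ℚ) →ₗ[ℚ] (H →₀ ℚ))
    (hB : ∀ x y : H,
      B (single x 1) (single y 1) = (ω x y : ℚ) • single (x + y) (1 : ℚ))
    (Z : H →₀ ℚ) :
    (∀ X : H →₀ ℚ, B Z X = 0) ↔
      Z ∈ Finsupp.supported ℚ ℚ (kerMu ω : Set H) := by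
  constructor
  · intro h
    rw [Finsupp.mem_supported]
    intro x hx y
    have hxy := bracket_single_apply ω B hB Z x y
    rw [h, Finsupp.zero_apply, eq_comm, mul_eq_zero] at hxy
    exact_mod_cast hxy.resolve_left (Finsupp.mem_support_iff.mp hx)
  · intro hZ X
    rw [Finsupp.mem_supported] at hZ
    have hBZ : B Z = 0 := by
      ext y w
      have hw := bracket_single_apply ω B hB Z (w - y) y
      rw [sub_add_cancel] at hw
      by_cases h0 : Z (w - y) = 0
      · simpa [h0] using hw
      · have hk : ω (w - y) y = 0 := hZ (Finsupp.mem_support_iff.mpr h0) y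
        rw [hk] at hw
        simpa using hw
    simp [hBZ]
end

section
/- The derived subalgebra of the homological Goldman Lie algebra is [ℚH, ℚH] = ℚ(H \ ker μ), i.e., the ℚ-span of all brackets [X,Y] with X, Y ∈ ℚH equals the ℚ-span of {[x] : x ∈ H, x ∉ ker μ}. -/
/-!
Since the form is alternating, `⟨x + y, y⟩ = ⟨x, y⟩`. Hence a nonzero bracket
`[[x], [y]] = ⟨x, y⟩ [x + y]` has `x + y ∉ ker μ`, which gives one inclusion by bilinearity.
Conversely, if `⟨x, y⟩ ≠ 0`, then `[x] = ⟨x, y⟩⁻¹ [[x - y], [y]]`.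
-/

open Finsupp

variable {H : Type*} [AddCommGroup H]

/-- The derived subalgebra of the homological Goldman Lie
algebra is `[ℚH, ℚH] = ℚ(H \ ker μ)`: the `ℚ`-span of all brackets equals the
span of `{[x] : x ∉ ker μ}`. -/
theorem derived_eq_span_compl_kerMu
    (ω : H →ₗ[ℤ] H →ₗ[ℤ] ℤ) (halt : ∀ x : H, ω x x = 0)
    (B : (H →₀ ℚ) →ₗ[ℚ] (H →₀ ℚ) →ₗ[ℚ] (H →₀ ℚ))
    (hB : ∀ x y : H,
      B (single x 1) (single y 1) = (ω x y : ℚ) • single (x + y) (1 : ℚ)) :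
    Submodule.span ℚ {z : H →₀ ℚ | ∃ X Y : H →₀ ℚ, z = B X Y}
      = Finsupp.supported ℚ ℚ ((kerMu ω : Set H)ᶜ) := by
  apply le_antisymm
  · rw [Submodule.span_le]
    rintro _ ⟨X, Y, rfl⟩
    rw [SetLike.mem_coe]
    -- By bilinearity it suffices to treat brackets of basis vectors.
    induction X using Finsupp.induction_linear with
    | zero => simp
    | add X₁ X₂ h₁ h₂ =>
      rw [map_add, LinearMap.add_apply]
      exact Submodule.add_mem _ h₁ h₂
    | single x a =>
      induction Y using Finsupp.induction_linear with
      | zero => simp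
      | add Y₁ Y₂ h₁ h₂ =>
        rw [map_add]
        exact Submodule.add_mem _ h₁ h₂
      | single y b =>
        rw [← Finsupp.smul_single_one x a, ← Finsupp.smul_single_one y b, map_smul, map_smul,
          LinearMap.smul_apply, hB]
        refine Submodule.smul_mem _ _ (Submodule.smul_mem _ _ ?_)
        by_cases hxy : ω x y = 0
        · simp [hxy]
        · refine Submodule.smul_mem _ _ (Finsupp.single_mem_supported ℚ 1 fun hmem => hxy ?_)
          -- `⟨x + y, y⟩ = ⟨x, y⟩`, so `x + y ∈ ker μ` would force `⟨x, y⟩ = 0`.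
          have h : ω (x + y) y = 0 := hmem y
          simpa [halt y] using h
  · rw [Finsupp.supported_eq_span_single, Submodule.span_le]
    rintro _ ⟨x, hx, rfl⟩
    obtain ⟨y, hy⟩ : ∃ y, ω x y ≠ 0 := not_forall.mp hx
    have hy' : (ω x y : ℚ) ≠ 0 := Int.cast_ne_zero.mpr hy
    -- `[[x - y], [y]] = ⟨x, y⟩ [x]`, and `⟨x, y⟩` is invertible in `ℚ`.
    have h : B (single (x - y) 1) (single y 1) = (ω x y : ℚ) • single x (1 : ℚ) := by
      rw [hB]
      simp [halt y]
    have hs : single x (1 : ℚ) = (ω x y : ℚ)⁻¹ • B (single (x - y) 1) (single y 1) := by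
      rw [h, inv_smul_smul₀ hy']
    change single x (1 : ℚ) ∈ _
    rw [hs]
    exact Submodule.smul_mem _ _ (Submodule.subset_span ⟨_, _, rfl⟩)
end

section
/- For every m ≥ 1, the m-th term of the derived series of the homological Goldman Lie algebra equals ℚ(H \ ker μ): with ℚH^{(1)} := [ℚH, ℚH] and ℚH^{(m)} := [ℚH^{(m-1)}, ℚH^{(m-1)}], one has ℚH^{(m)} = ℚ(H \ ker μ) for all m ≥ 1. -/
/-!
Both inclusions come down to basis vectors. If `⟨x, y⟩ ≠ 0` then `⟨x + y, y⟩ = ⟨x, y⟩ ≠ 0`, so every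
bracket `⟨x, y⟩ [x + y]` lies in `ℚ(H \ ker μ)`. Conversely, if `⟨z, y⟩ ≠ 0` then `z - y` and `y` both
pair nontrivially with some element, hence lie outside `ker μ`, and `[[z - y], [y]] = ⟨z, y⟩ [z]`.
Thus `[U, U] = ℚ(H \ ker μ)` for every subspace `U ⊇ ℚ(H \ ker μ)`
(`bracketSub_self_eq_supported`), and induction on `m` finishes the proof.
-/

open Finsupp

variable {H : Type*} [AddCommGroup H]

/-- The span of brackets `[U, W]` of two subspaces of `ℚH`. -/
noncomputable def bracketSub (B : (H →₀ ℚ) →ₗ[ℚ] (H →₀ ℚ) →ₗ[ℚ] (H →₀ ℚ))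
    (U W : Submodule ℚ (H →₀ ℚ)) : Submodule ℚ (H →₀ ℚ) :=
  Submodule.span ℚ {z : H →₀ ℚ | ∃ u ∈ U, ∃ w ∈ W, z = B u w}

/-- The derived series: `ℚH⁽⁰⁾ = ℚH`, `ℚH⁽ᵐ⁺¹⁾ = [ℚH⁽ᵐ⁾, ℚH⁽ᵐ⁾]`;
in particular `ℚH⁽¹⁾ = [ℚH, ℚH]`. -/
noncomputable def goldmanDerivedSeries (B : (H →₀ ℚ) →ₗ[ℚ] (H →₀ ℚ) →ₗ[ℚ] (H →₀ ℚ)) :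
    ℕ → Submodule ℚ (H →₀ ℚ)
  | 0 => ⊤
  | m + 1 => bracketSub B (goldmanDerivedSeries B m) (goldmanDerivedSeries B m)

lemma bracket_mem_supported
    (ω : H →ₗ[ℤ] H →ₗ[ℤ] ℤ) (halt : ∀ x : H, ω x x = 0)
    (B : (H →₀ ℚ) →ₗ[ℚ] (H →₀ ℚ) →ₗ[ℚ] (H →₀ ℚ))
    (hB : ∀ x y : H,
      B (single x 1) (single y 1) = (ω x y : ℚ) • single (x + y) (1 : ℚ))
    (u w : H →₀ ℚ) :
    B u w ∈ Finsupp.supported ℚ ℚ ((kerMu ω : Set H)ᶜ) := by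
  induction u using Finsupp.induction_linear with
  | zero => simp
  | add f g hf hg =>
    rw [map_add, LinearMap.add_apply]
    exact add_mem hf hg
  | single x a =>
    induction w using Finsupp.induction_linear with
    | zero => simp
    | add f g hf hg =>
      rw [map_add]
      exact add_mem hf hg
    | single y b =>
      have hx : single x a = a • single x (1 : ℚ) := by simp
      have hy : single y b = b • single y (1 : ℚ) := by simp
      rw [hx, hy, map_smul, map_smul, LinearMap.smul_apply, hB]
      refine Submodule.smul_mem _ _ (Submodule.smul_mem _ _ ?_)
      by_cases h : ω x y = 0
      · simp [h]
      · refine Submodule.smul_mem _ _ (Finsupp.single_mem_supported ℚ _ fun hk => h ?_)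
        have := hk y
        simpa [halt] using this

/-- The bracket of any subspace containing `ℚ(H \ ker μ)` with itself is exactly `ℚ(H \ ker μ)`. -/
lemma bracketSub_self_eq_supported
    (ω : H →ₗ[ℤ] H →ₗ[ℤ] ℤ) (halt : ∀ x : H, ω x x = 0)
    (B : (H →₀ ℚ) →ₗ[ℚ] (H →₀ ℚ) →ₗ[ℚ] (H →₀ ℚ))
    (hB : ∀ x y : H,
      B (single x 1) (single y 1) = (ω x y : ℚ) • single (x + y) (1 : ℚ))
    (U : Submodule ℚ (H →₀ ℚ))
    (hU : Finsupp.supported ℚ ℚ ((kerMu ω : Set H)ᶜ) ≤ U) :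
    bracketSub B U U = Finsupp.supported ℚ ℚ ((kerMu ω : Set H)ᶜ) := by
  apply le_antisymm
  · refine Submodule.span_le.2 ?_
    rintro _ ⟨u, -, w, -, rfl⟩
    exact bracket_mem_supported ω halt B hB u w
  · rw [Finsupp.supported_eq_span_single, Submodule.span_le]
    rintro _ ⟨z, hz, rfl⟩
    obtain ⟨y, hy⟩ : ∃ y, ω z y ≠ 0 := by
      by_contra! h
      exact hz h
    have hzy : ω (z - y) y = ω z y := by simp [halt]
    have hz_sub : z - y ∉ kerMu ω := fun h => hy (hzy ▸ h y)
    have hy_not : y ∉ kerMu ω := fun h => by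
      -- `⟨z, y⟩ = -⟨y, z⟩`, by expanding `⟨z + y, z + y⟩ = 0`
      have h1 := halt (z + y)
      have h2 : ω y z = 0 := h z
      simp only [map_add, LinearMap.add_apply, halt, h2] at h1
      exact hy (by simpa using h1)
    have key : single z (1 : ℚ) =
        ((ω z y : ℚ)⁻¹) • B (single (z - y) 1) (single y 1) := by
      have hq : (ω z y : ℚ) ≠ 0 := by exact_mod_cast hy
      rw [hB, hzy, sub_add_cancel, smul_smul, inv_mul_cancel₀ hq, one_smul]
    change single z (1 : ℚ) ∈ bracketSub B U U
    rw [key]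
    exact Submodule.smul_mem _ _ (Submodule.subset_span
      ⟨_, hU (Finsupp.single_mem_supported ℚ _ hz_sub),
        _, hU (Finsupp.single_mem_supported ℚ _ hy_not), rfl⟩)

/-- For every `m ≥ 1`, the `m`-th term of the derived series
of the homological Goldman Lie algebra equals `ℚ(H \ ker μ)`. -/
theorem goldmanDerivedSeries_eq_span_compl_kerMu
    (ω : H →ₗ[ℤ] H →ₗ[ℤ] ℤ) (halt : ∀ x : H, ω x x = 0)
    (B : (H →₀ ℚ) →ₗ[ℚ] (H →₀ ℚ) →ₗ[ℚ] (H →₀ ℚ))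
    (hB : ∀ x y : H,
      B (single x 1) (single y 1) = (ω x y : ℚ) • single (x + y) (1 : ℚ))
    (m : ℕ) (hm : 1 ≤ m) :
    goldmanDerivedSeries B m = Finsupp.supported ℚ ℚ ((kerMu ω : Set H)ᶜ) := by
  induction m, hm using Nat.le_induction with
  | base => exact bracketSub_self_eq_supported ω halt B hB _ le_top
  | succ n _ ih => exact bracketSub_self_eq_supported ω halt B hB _ ih.ge
end

section
/- Suppose the alternating form ⟨-,-⟩ is non-degenerate (i.e., if ⟨x,y⟩ = 0 for all y ∈ H then x = 0) and H ≠ 0. Then the ideals of the homological Goldman Lie algebra ℚH are exactly the four subspaces 0, ℚ·[0], ℚ(H \ {0}), and ℚH. -/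
/-!
For `y : H` the composite `ad [-2y] ∘ ad [y] ∘ ad [y]` is diagonal in the basis `[x]`, with
eigenvalue `-2 ⟨y, x⟩ ^ 3`. Cubing is injective on `ℤ`, so by non-degeneracy these diagonal
operators jointly separate all basis vectors (`single_mem_of_ideal`). Hence every ideal is spanned
by the set `S` of basis vectors it contains, and `S` satisfies: `x ∈ S` and `⟨y, x⟩ ≠ 0` imply
`y + x ∈ S`.

If `S` contains some `x ≠ 0`, it contains each `z ≠ 0`: two nonzero homomorphisms to `ℤ` are
simultaneously nonzero at some `w`, so there is `w` with `⟨x, w⟩ ≠ 0` and `⟨w, z⟩ ≠ 0`, and one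
moves from `x` to `w` to `z`. So `S` is one of `∅`, `{0}`, `{0}ᶜ`, `H`. Conversely each of these
sets has the stated closure property, because `⟨y, 0⟩ = 0` and `⟨y, -y⟩ = 0`.
-/

open Finsupp

variable {H : Type*} [AddCommGroup H]

/-- The span of a set of basis vectors is an ideal as soon as the set is closed under the moves
`x ↦ y + x` with `⟨y, x⟩ ≠ 0`. -/
lemma supported_isIdeal
    (ω : H →ₗ[ℤ] H →ₗ[ℤ] ℤ)
    (B : (H →₀ ℚ) →ₗ[ℚ] (H →₀ ℚ) →ₗ[ℚ] (H →₀ ℚ))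
    (hB : ∀ x y : H,
      B (single x 1) (single y 1) = (ω x y : ℚ) • single (x + y) (1 : ℚ))
    (S : Set H) (hS : ∀ x ∈ S, ∀ y, ω y x ≠ 0 → y + x ∈ S)
    (X Y : H →₀ ℚ) (hY : Y ∈ Finsupp.supported ℚ ℚ S) :
    B X Y ∈ Finsupp.supported ℚ ℚ S := by
  induction X using Finsupp.induction_linear with
  | zero => simp
  | add f g hf hg =>
    rw [map_add, LinearMap.add_apply]
    exact add_mem hf hg
  | single y c =>
    rw [Finsupp.supported_eq_span_single] at hY
    induction hY using Submodule.span_induction with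
    | mem v hv =>
      obtain ⟨x, hx, rfl⟩ := hv
      have hc : single y c = c • single y (1 : ℚ) := by simp
      rw [hc, map_smul, LinearMap.smul_apply, hB]
      refine Submodule.smul_mem _ _ ?_
      by_cases h : ω y x = 0
      · simp [h]
      · exact Submodule.smul_mem _ _ (Finsupp.single_mem_supported ℚ 1 (hS x hx y h))
    | zero => simp
    | add u v _ _ hu hv =>
      rw [map_add]
      exact add_mem hu hv
    | smul a u _ hu =>
      rw [map_smul]
      exact Submodule.smul_mem _ _ hu

/-- `ad [-2y] ∘ ad [y] ∘ ad [y]` is diagonal with eigenvalue `-2 ⟨y, a⟩ ^ 3` on `[a]`. -/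
lemma triple_bracket_apply
    (ω : H →ₗ[ℤ] H →ₗ[ℤ] ℤ) (halt : ∀ x : H, ω x x = 0)
    (B : (H →₀ ℚ) →ₗ[ℚ] (H →₀ ℚ) →ₗ[ℚ] (H →₀ ℚ))
    (hB : ∀ x y : H,
      B (single x 1) (single y 1) = (ω x y : ℚ) • single (x + y) (1 : ℚ))
    (y : H) (Y : H →₀ ℚ) (a : H) :
    B (single (-(y + y)) 1) (B (single y 1) (B (single y 1) Y)) a
      = -2 * (ω y a : ℚ) ^ 3 * Y a := by
  classical
  induction Y using Finsupp.induction_linear with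
  | zero => simp
  | add f g hf hg => simp only [map_add, Finsupp.add_apply, hf, hg, mul_add]
  | single x c =>
    have hc : single x c = c • single x (1 : ℚ) := by simp
    have hx : -(y + y) + (y + (y + x)) = x := by abel
    rw [hc]
    simp only [map_smul, hB, hx, Finsupp.smul_apply, smul_eq_mul]
    by_cases h : x = a
    · subst h
      simp [halt]
      ring
    · simp [Finsupp.single_eq_of_ne' h]

/-- An ideal contains every basis vector occurring in one of its elements: the other basis vectors
of the element, collected in `s`, are killed one at a time by the diagonal operators of
`triple_bracket_apply`. -/
lemma single_mem_of_ideal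
    (ω : H →ₗ[ℤ] H →ₗ[ℤ] ℤ) (halt : ∀ x : H, ω x x = 0)
    (hnd : ∀ x : H, (∀ y : H, ω x y = 0) → x = 0)
    (B : (H →₀ ℚ) →ₗ[ℚ] (H →₀ ℚ) →ₗ[ℚ] (H →₀ ℚ))
    (hB : ∀ x y : H,
      B (single x 1) (single y 1) = (ω x y : ℚ) • single (x + y) (1 : ℚ))
    (𝔥 : Submodule ℚ (H →₀ ℚ)) (hI : ∀ X Y : H →₀ ℚ, Y ∈ 𝔥 → B X Y ∈ 𝔥)
    (x : H) (s : Finset H) (Y : H →₀ ℚ) (hY : Y ∈ 𝔥) (hx : Y x ≠ 0)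
    (hs : ∀ a, a ≠ x → a ∉ s → Y a = 0) : single x (1 : ℚ) ∈ 𝔥 := by
  classical
  induction s using Finset.induction_on generalizing Y with
  | empty =>
    have h : single x (1 : ℚ) = (Y x)⁻¹ • Y := by
      ext a
      by_cases ha : a = x
      · subst ha
        simp [hx]
      · simp [hs a ha, Finsupp.single_eq_of_ne ha]
    rw [h]
    exact Submodule.smul_mem _ _ hY
  | insert b s _ ih =>
    by_cases hb : b = x
    · exact ih Y hY hx fun a ha has => hs a ha (by simp [has, hb, ha])
    · obtain ⟨y, hy⟩ : ∃ y, ω y x ≠ ω y b := by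
        by_contra! h
        refine hb (sub_eq_zero.1 (hnd _ fun y => ?_))
        have hneg : ∀ u v : H, ω u v = -ω v u := fun u v => by
          have := halt (u + v)
          simp only [map_add, LinearMap.add_apply, halt] at this
          linarith
        rw [hneg, map_sub, h y]
        simp
      -- subtract the eigenvalue at `b` from the diagonal operator attached to `y`
      refine ih (B (single (-(y + y)) 1) (B (single y 1) (B (single y 1) Y))
        - (-2 * (ω y b : ℚ) ^ 3) • Y)
        (sub_mem (hI _ _ (hI _ _ (hI _ _ hY))) (Submodule.smul_mem _ _ hY)) ?_ ?_
      · rw [Finsupp.sub_apply, triple_bracket_apply ω halt B hB, Finsupp.smul_apply, smul_eq_mul,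
          ← sub_mul]
        refine mul_ne_zero (fun h => hy ?_) hx
        have h3 : (ω y x : ℚ) ^ 3 = (ω y b : ℚ) ^ 3 := by linarith
        have h3' : (ω y x) ^ 3 = (ω y b) ^ 3 := by exact_mod_cast h3
        exact (Odd.strictMono_pow (by decide : Odd 3)).injective h3'
      · intro a ha has
        rw [Finsupp.sub_apply, triple_bracket_apply ω halt B hB, Finsupp.smul_apply, smul_eq_mul]
        by_cases hab : a = b
        · subst hab
          ring
        · simp [hs a ha (by simp [hab, has])]

/-- If the alternating form `⟨-,-⟩` is non-degenerate and
`H ≠ 0`, then the ideals of `ℚH` are exactly `0`, `ℚ[0]`, `ℚ(H \ 0)` and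
`ℚH`. -/
theorem ideals_of_nondegenerate
    (ω : H →ₗ[ℤ] H →ₗ[ℤ] ℤ) (halt : ∀ x : H, ω x x = 0)
    (hnd : ∀ x : H, (∀ y : H, ω x y = 0) → x = 0)
    (hH : ∃ x : H, x ≠ 0)
    (B : (H →₀ ℚ) →ₗ[ℚ] (H →₀ ℚ) →ₗ[ℚ] (H →₀ ℚ))
    (hB : ∀ x y : H,
      B (single x 1) (single y 1) = (ω x y : ℚ) • single (x + y) (1 : ℚ))
    (𝔥 : Submodule ℚ (H →₀ ℚ)) :
    (∀ X Y : H →₀ ℚ, Y ∈ 𝔥 → B X Y ∈ 𝔥) ↔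
      (𝔥 = ⊥ ∨ 𝔥 = Finsupp.supported ℚ ℚ ({0} : Set H) ∨
       𝔥 = Finsupp.supported ℚ ℚ ({(0 : H)}ᶜ : Set H) ∨ 𝔥 = ⊤) := by
  classical
  have hneg : ∀ u v : H, ω u v = -ω v u := fun u v => by
    have := halt (u + v)
    simp only [map_add, LinearMap.add_apply, halt] at this
    linarith
  constructor
  · intro hI
    have hmem : ∀ Y ∈ 𝔥, ∀ x, Y x ≠ 0 → single x (1 : ℚ) ∈ 𝔥 := fun Y hY x hx =>
      single_mem_of_ideal ω halt hnd B hB 𝔥 hI x Y.support Y hY hx (by simp)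
    have hspan : 𝔥 = Finsupp.supported ℚ ℚ {x | single x (1 : ℚ) ∈ 𝔥} := by
      apply le_antisymm
      · intro Y hY
        rw [Finsupp.mem_supported]
        intro x hx
        exact hmem Y hY x (by simpa using hx)
      · rw [Finsupp.supported_eq_span_single, Submodule.span_le]
        rintro _ ⟨x, hx, rfl⟩
        exact hx
    have hmove : ∀ x z : H, single x (1 : ℚ) ∈ 𝔥 → ω x z ≠ 0 → single z (1 : ℚ) ∈ 𝔥 := by
      intro x z hx hz
      have h := hI (single (z - x) 1) _ hx
      have hne : ω (z - x) x ≠ 0 := by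
        rw [hneg, map_sub, halt]
        simpa using hz
      rw [hB, sub_add_cancel] at h
      exact (Submodule.smul_mem_iff _ (by exact_mod_cast hne)).1 h
    have hall : ∀ x, x ≠ 0 → single x (1 : ℚ) ∈ 𝔥 → ∀ z, z ≠ 0 → single z (1 : ℚ) ∈ 𝔥 := by
      intro x hx0 hx z hz0
      obtain ⟨u, hu⟩ : ∃ u, ω x u ≠ 0 := by
        by_contra! h
        exact hx0 (hnd x h)
      obtain ⟨v, hv⟩ : ∃ v, ω z v ≠ 0 := by
        by_contra! h
        exact hz0 (hnd z h)
      -- one of `u`, `v`, `u + v` pairs nontrivially with both `x` and `z`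
      obtain ⟨w, hxw, hzw⟩ : ∃ w, ω x w ≠ 0 ∧ ω z w ≠ 0 := by
        by_cases h1 : ω z u = 0
        · by_cases h2 : ω x v = 0
          · exact ⟨u + v, by simpa [h2] using hu, by simpa [h1] using hv⟩
          · exact ⟨v, h2, hv⟩
        · exact ⟨u, hu, h1⟩
      refine hmove w z (hmove x w hx hxw) ?_
      rw [hneg]
      simpa using hzw
    by_cases h0 : single (0 : H) (1 : ℚ) ∈ 𝔥 <;>
      by_cases h1 : ∃ x, x ≠ 0 ∧ single x (1 : ℚ) ∈ 𝔥
    · obtain ⟨x, hx0, hx⟩ := h1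
      right; right; right
      have hS : {x | single x (1 : ℚ) ∈ 𝔥} = Set.univ := by
        ext z
        by_cases hz : z = 0
        · simp [hz, h0]
        · simp [hall x hx0 hx z hz]
      rw [hspan, hS, Finsupp.supported_univ]
    · right; left
      have hS : {x | single x (1 : ℚ) ∈ 𝔥} = {0} := by
        ext z
        simp only [Set.mem_ofPred_eq, Set.mem_singleton_iff]
        refine ⟨fun h => by_contra fun hz => h1 ⟨z, hz, h⟩, ?_⟩
        rintro rfl
        exact h0
      rw [hspan, hS]
    · obtain ⟨x, hx0, hx⟩ := h1
      right; right; left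
      have hS : {x | single x (1 : ℚ) ∈ 𝔥} = {(0 : H)}ᶜ := by
        ext z
        simp only [Set.mem_ofPred_eq, Set.mem_compl_iff, Set.mem_singleton_iff]
        refine ⟨?_, hall x hx0 hx z⟩
        rintro h rfl
        exact h0 h
      rw [hspan, hS]
    · left
      have hS : {x | single x (1 : ℚ) ∈ 𝔥} = ∅ := by
        ext z
        simp only [Set.mem_ofPred_eq, Set.mem_empty_iff_false, iff_false]
        intro h
        by_cases hz : z = 0
        · exact h0 (hz ▸ h)
        · exact h1 ⟨z, hz, h⟩
      rw [hspan, hS, Finsupp.supported_empty]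
  · rintro (rfl | rfl | rfl | rfl) X Y hY
    · rw [Submodule.mem_bot] at hY ⊢
      rw [hY, map_zero]
    · refine supported_isIdeal ω B hB _ ?_ X Y hY
      rintro x rfl y h
      simp at h
    · refine supported_isIdeal ω B hB _ ?_ X Y hY
      intro x _ y h hyx
      rw [Set.mem_singleton_iff] at hyx
      obtain rfl := eq_neg_of_add_eq_zero_left hyx
      simp [halt] at h
    · trivial
end
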